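/- Let R be a Leibniz conformal algebra, Q a ℂ[∂]-module, and E = R ⊕ Q as ℂ[∂]-modules. Then: (1) the map LH²_R(Q,R) := TCL(R,Q)/≡ → CExtd(E,R) sending the equivalence class of a Leibniz conformal extending structure Ω(R,Q) to the equivalence class of the unified product (R♮Q, [·_λ·]) is a bijection; (2) the map LH²(Q,R) := TCL(R,Q)/≈ → CExtd'(E,R) defined in the same way is a bijection. -/

import Mathlib

noncomputable section

/-- `g : ℂ → R` is (the evaluation of) a polynomial in `λ` with coefficients in `R`,
i.e. an element of `R[λ]`. -/
def IsPolyFun {R : Type*} [AddCommGroup R] [Module ℂ R] (g : ℂ → R) : Prop :=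
  ∃ (N : ℕ) (c : ℕ → R), ∀ l : ℂ, g l = ∑ i ∈ Finset.range N, l ^ i • c i

/-- A conformal bilinear map `U × V → W[λ]`, in evaluated form: `f_λ(∂u, v) = -λ f_λ(u,v)`
and `f_λ(u, ∂v) = (∂ + λ) f_λ(u,v)`. -/
structure IsConformalBilin {U V W : Type*}
    [AddCommGroup U] [Module ℂ U] [AddCommGroup V] [Module ℂ V]
    [AddCommGroup W] [Module ℂ W]
    (DU : Module.End ℂ U) (DV : Module.End ℂ V) (DW : Module.End ℂ W)
    (f : ℂ → U → V → W) : Prop where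
  add_left : ∀ (l : ℂ) (a a' : U) (b : V), f l (a + a') b = f l a b + f l a' b
  smul_left : ∀ (l c : ℂ) (a : U) (b : V), f l (c • a) b = c • f l a b
  add_right : ∀ (l : ℂ) (a : U) (b b' : V), f l a (b + b') = f l a b + f l a b'
  smul_right : ∀ (l c : ℂ) (a : U) (b : V), f l a (c • b) = c • f l a b
  poly : ∀ (a : U) (b : V), IsPolyFun (fun l => f l a b)
  conf_left : ∀ (l : ℂ) (a : U) (b : V), f l (DU a) b = (-l) • f l a b
  conf_right : ∀ (l : ℂ) (a : U) (b : V), f l a (DV b) = DW (f l a b) + l • f l a b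

/-- A Leibniz conformal algebra structure on the `ℂ[∂]`-module `(R, D)`:
a conformal bilinear `λ`-bracket satisfying the Jacobi identity. -/
structure IsLeibnizConformal {R : Type*} [AddCommGroup R] [Module ℂ R]
    (D : Module.End ℂ R) (br : ℂ → R → R → R) : Prop where
  bilin : IsConformalBilin D D D br
  jacobi : ∀ (l m : ℂ) (a b c : R),
    br l a (br m b c) = br (l + m) (br l a b) c + br m b (br l a c)

/-- An extending datum `Ω(R,Q) = (↼, ⇀, ◁, ▷, f, {·_λ·})` of a Leibniz conformal algebra
`R` by a `ℂ[∂]`-module `Q`: six conformal bilinear maps.  Here `lh = ↼`, `rh = ⇀`,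
`lt = ◁`, `rt = ▷`, `fm = f`, `bq = {·_λ·}`. -/
structure IsExtendingDatum {R Q : Type*}
    [AddCommGroup R] [Module ℂ R] [AddCommGroup Q] [Module ℂ Q]
    (DR : Module.End ℂ R) (DQ : Module.End ℂ Q)
    (lh : ℂ → R → Q → R) (rh : ℂ → R → Q → Q)
    (lt : ℂ → Q → R → Q) (rt : ℂ → Q → R → R)
    (fm : ℂ → Q → Q → R) (bq : ℂ → Q → Q → Q) : Prop where
  lh_bilin : IsConformalBilin DR DQ DR lh
  rh_bilin : IsConformalBilin DR DQ DQ rh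
  lt_bilin : IsConformalBilin DQ DR DQ lt
  rt_bilin : IsConformalBilin DQ DR DR rt
  fm_bilin : IsConformalBilin DQ DQ DR fm
  bq_bilin : IsConformalBilin DQ DQ DQ bq

/-- The unified product bracket on `R × Q`:
`[(a,x)_λ (b,y)] = ([a_λ b] + a↼_λ y + x▷_λ b + f_λ(x,y), a⇀_λ y + x◁_λ b + {x_λ y})`. -/
def unifiedBracket {R Q : Type*}
    [AddCommGroup R] [Module ℂ R] [AddCommGroup Q] [Module ℂ Q]
    (br : ℂ → R → R → R)
    (lh : ℂ → R → Q → R) (rh : ℂ → R → Q → Q)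
    (lt : ℂ → Q → R → Q) (rt : ℂ → Q → R → R)
    (fm : ℂ → Q → Q → R) (bq : ℂ → Q → Q → Q) :
    ℂ → R × Q → R × Q → R × Q :=
  fun l p q =>
    (br l p.1 q.1 + lh l p.1 q.2 + rt l p.2 q.1 + fm l p.2 q.2,
     rh l p.1 q.2 + lt l p.2 q.1 + bq l p.2 q.2)

/-- `φ` commutes with the `ℂ[∂]`-module structure, i.e. is a `ℂ[∂]`-module map. -/
def PreservesD {E : Type*} [AddCommGroup E] [Module ℂ E]
    (D : Module.End ℂ E) (φ : E →ₗ[ℂ] E) : Prop :=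
  ∀ u : E, φ (D u) = D (φ u)

/-- `φ` intertwines the two `λ`-brackets. -/
def IsBracketHom {E : Type*} [AddCommGroup E] [Module ℂ E]
    (br br' : ℂ → E → E → E) (φ : E →ₗ[ℂ] E) : Prop :=
  ∀ (l : ℂ) (u v : E), φ (br l u v) = br' l (φ u) (φ v)

/-- `φ : R ⊕ Q → R ⊕ Q` stabilizes `R`. -/
def StabilizesFst {R Q : Type*} [AddCommGroup R] [Module ℂ R] [AddCommGroup Q] [Module ℂ Q]
    (φ : R × Q →ₗ[ℂ] R × Q) : Prop :=
  ∀ a : R, φ (a, 0) = (a, 0)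

/-- `φ : R ⊕ Q → R ⊕ Q` co-stabilizes `Q`. -/
def CoStabilizesSnd {R Q : Type*} [AddCommGroup R] [Module ℂ R] [AddCommGroup Q] [Module ℂ Q]
    (φ : R × Q →ₗ[ℂ] R × Q) : Prop :=
  ∀ p : R × Q, (φ p).2 = p.2

/-- The extending datum `(lh, rh, lt, rt, fm, bq)` is obtained from
`(lh', rh', lt', rt', fm', bq')` via the pair `(u, v)` (Definition 3.5 of the paper). -/
def DatumEquivVia {R Q : Type*}
    [AddCommGroup R] [Module ℂ R] [AddCommGroup Q] [Module ℂ Q]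
    (DR : Module.End ℂ R) (DQ : Module.End ℂ Q) (br : ℂ → R → R → R)
    (lh : ℂ → R → Q → R) (rh : ℂ → R → Q → Q)
    (lt : ℂ → Q → R → Q) (rt : ℂ → Q → R → R)
    (fm : ℂ → Q → Q → R) (bq : ℂ → Q → Q → Q)
    (lh' : ℂ → R → Q → R) (rh' : ℂ → R → Q → Q)
    (lt' : ℂ → Q → R → Q) (rt' : ℂ → Q → R → R)
    (fm' : ℂ → Q → Q → R) (bq' : ℂ → Q → Q → Q)
    (u : Q →ₗ[ℂ] R) (v : Q ≃ₗ[ℂ] Q) : Prop :=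
  (∀ q : Q, u (DQ q) = DR (u q)) ∧
  (∀ q : Q, v (DQ q) = DQ (v q)) ∧
  (∀ (l : ℂ) (a : R) (x : Q), rh l a x = v.symm (rh' l a (v x))) ∧
  (∀ (l : ℂ) (a : R) (x : Q),
      lh l a x = br l a (u x) + lh' l a (v x) - u (rh l a x)) ∧
  (∀ (l : ℂ) (x : Q) (a : R), lt l x a = v.symm (lt' l (v x) a)) ∧
  (∀ (l : ℂ) (x : Q) (a : R),
      rt l x a = br l (u x) a + rt' l (v x) a - u (lt l x a)) ∧
  (∀ (l : ℂ) (x y : Q),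
      bq l x y = v.symm (rh' l (u x) (v y)) + v.symm (lt' l (v x) (u y))
        + v.symm (bq' l (v x) (v y))) ∧
  (∀ (l : ℂ) (x y : Q),
      fm l x y = br l (u x) (u y) + lh' l (u x) (v y) + rt' l (v x) (u y)
        + fm' l (v x) (v y) - u (bq l x y))

/-- A Leibniz conformal extending structure of `(R, DR, br)` by the `ℂ[∂]`-module `Q`
(an element of `TCL(R,Q)`). -/
structure ExtStruct (R Q : Type*)
    [AddCommGroup R] [Module ℂ R] [AddCommGroup Q] [Module ℂ Q]
    (DR : Module.End ℂ R) (DQ : Module.End ℂ Q) (br : ℂ → R → R → R) where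
  lh : ℂ → R → Q → R
  rh : ℂ → R → Q → Q
  lt : ℂ → Q → R → Q
  rt : ℂ → Q → R → R
  fm : ℂ → Q → Q → R
  bq : ℂ → Q → Q → Q
  datum : IsExtendingDatum DR DQ lh rh lt rt fm bq
  leib : IsLeibnizConformal (LinearMap.prodMap DR DQ)
    (unifiedBracket br lh rh lt rt fm bq)

/-- A Leibniz conformal algebra structure on `E = R ⊕ Q` containing `R`
as a subalgebra (an element of the set underlying `CExtd(E,R)`). -/
structure LCAOn (R Q : Type*)
    [AddCommGroup R] [Module ℂ R] [AddCommGroup Q] [Module ℂ Q]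
    (DR : Module.End ℂ R) (DQ : Module.End ℂ Q) (br : ℂ → R → R → R) where
  brE : ℂ → R × Q → R × Q → R × Q
  leib : IsLeibnizConformal (LinearMap.prodMap DR DQ) brE
  sub : ∀ (l : ℂ) (a b : R), brE l (a, 0) (b, 0) = (br l a b, 0)

theorem IsConformalBilin.zero_left {U V W : Type*}
    [AddCommGroup U] [Module ℂ U] [AddCommGroup V] [Module ℂ V]
    [AddCommGroup W] [Module ℂ W]
    {DU : Module.End ℂ U} {DV : Module.End ℂ V} {DW : Module.End ℂ W}
    {f : ℂ → U → V → W} (hf : IsConformalBilin DU DV DW f) (l : ℂ) (b : V) :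
    f l 0 b = 0 := by
  have h := hf.smul_left l 0 0 b
  simpa using h

theorem IsConformalBilin.zero_right {U V W : Type*}
    [AddCommGroup U] [Module ℂ U] [AddCommGroup V] [Module ℂ V]
    [AddCommGroup W] [Module ℂ W]
    {DU : Module.End ℂ U} {DV : Module.End ℂ V} {DW : Module.End ℂ W}
    {f : ℂ → U → V → W} (hf : IsConformalBilin DU DV DW f) (l : ℂ) (a : U) :
    f l a 0 = 0 := by
  have h := hf.smul_right l 0 a 0
  simpa using h

/-- The unified product of an extending structure, as a Leibniz conformal algebra
structure on `E = R ⊕ Q` containing `R` as a subalgebra. -/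
def ExtStruct.toLCA {R Q : Type*}
    [AddCommGroup R] [Module ℂ R] [AddCommGroup Q] [Module ℂ Q]
    {DR : Module.End ℂ R} {DQ : Module.End ℂ Q} {br : ℂ → R → R → R}
    (Ω : ExtStruct R Q DR DQ br) : LCAOn R Q DR DQ br where
  brE := unifiedBracket br Ω.lh Ω.rh Ω.lt Ω.rt Ω.fm Ω.bq
  leib := Ω.leib
  sub := by
    intro l a b
    simp [unifiedBracket, Ω.datum.lh_bilin.zero_right, Ω.datum.rt_bilin.zero_left,
      Ω.datum.fm_bilin.zero_left, Ω.datum.rh_bilin.zero_right,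
      Ω.datum.lt_bilin.zero_left, Ω.datum.bq_bilin.zero_left]

/-- The equivalence relation `≡` on extending structures. -/
def extEquiv {R Q : Type*}
    [AddCommGroup R] [Module ℂ R] [AddCommGroup Q] [Module ℂ Q]
    (DR : Module.End ℂ R) (DQ : Module.End ℂ Q) (br : ℂ → R → R → R)
    (Ω Ω' : ExtStruct R Q DR DQ br) : Prop :=
  ∃ (u : Q →ₗ[ℂ] R) (v : Q ≃ₗ[ℂ] Q),
    DatumEquivVia DR DQ br Ω.lh Ω.rh Ω.lt Ω.rt Ω.fm Ω.bq
      Ω'.lh Ω'.rh Ω'.lt Ω'.rt Ω'.fm Ω'.bq u v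

/-- The relation `≈` (cohomologous) on extending structures. -/
def extCohom {R Q : Type*}
    [AddCommGroup R] [Module ℂ R] [AddCommGroup Q] [Module ℂ Q]
    (DR : Module.End ℂ R) (DQ : Module.End ℂ Q) (br : ℂ → R → R → R)
    (Ω Ω' : ExtStruct R Q DR DQ br) : Prop :=
  ∃ u : Q →ₗ[ℂ] R,
    DatumEquivVia DR DQ br Ω.lh Ω.rh Ω.lt Ω.rt Ω.fm Ω.bq
      Ω'.lh Ω'.rh Ω'.lt Ω'.rt Ω'.fm Ω'.bq u (LinearEquiv.refl ℂ Q)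

/-- The relation `≡` on Leibniz conformal algebra structures on `E = R ⊕ Q` containing `R`
as a subalgebra: isomorphism stabilizing `R`. -/
def lcaEquiv {R Q : Type*}
    [AddCommGroup R] [Module ℂ R] [AddCommGroup Q] [Module ℂ Q]
    (DR : Module.End ℂ R) (DQ : Module.End ℂ Q) (br : ℂ → R → R → R)
    (A B : LCAOn R Q DR DQ br) : Prop :=
  ∃ φ : R × Q →ₗ[ℂ] R × Q, Function.Bijective φ ∧
    PreservesD (LinearMap.prodMap DR DQ) φ ∧ IsBracketHom A.brE B.brE φ ∧
    StabilizesFst φ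

/-- The relation `≈` on Leibniz conformal algebra structures on `E = R ⊕ Q` containing `R`
as a subalgebra: isomorphism stabilizing `R` and co-stabilizing `Q`. -/
def lcaCohom {R Q : Type*}
    [AddCommGroup R] [Module ℂ R] [AddCommGroup Q] [Module ℂ Q]
    (DR : Module.End ℂ R) (DQ : Module.End ℂ Q) (br : ℂ → R → R → R)
    (A B : LCAOn R Q DR DQ br) : Prop :=
  ∃ φ : R × Q →ₗ[ℂ] R × Q, Function.Bijective φ ∧
    PreservesD (LinearMap.prodMap DR DQ) φ ∧ IsBracketHom A.brE B.brE φ ∧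
    StabilizesFst φ ∧ CoStabilizesSnd φ

theorem IsPolyFun.comp_lin {V W : Type*} [AddCommGroup V] [Module ℂ V] [AddCommGroup W]
    [Module ℂ W] {g : ℂ → V} (hg : IsPolyFun g) (p : V →ₗ[ℂ] W) :
    IsPolyFun (fun l => p (g l)) := by
  obtain ⟨N, c, h⟩ := hg
  exact ⟨N, fun i => p (c i), fun l => by simp [h l, map_sum]⟩

/-- Precompose and postcompose a conformal bilinear map with module maps. -/
theorem IsConformalBilin.comp_lin {U V W U' V' W' : Type*}
    [AddCommGroup U] [Module ℂ U] [AddCommGroup V] [Module ℂ V]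
    [AddCommGroup W] [Module ℂ W]
    [AddCommGroup U'] [Module ℂ U'] [AddCommGroup V'] [Module ℂ V']
    [AddCommGroup W'] [Module ℂ W']
    {DU : Module.End ℂ U} {DV : Module.End ℂ V} {DW : Module.End ℂ W}
    {DU' : Module.End ℂ U'} {DV' : Module.End ℂ V'} {DW' : Module.End ℂ W'}
    {f : ℂ → U → V → W} (hf : IsConformalBilin DU DV DW f)
    (i : U' →ₗ[ℂ] U) (j : V' →ₗ[ℂ] V) (p : W →ₗ[ℂ] W')
    (hi : ∀ x, i (DU' x) = DU (i x)) (hj : ∀ x, j (DV' x) = DV (j x))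
    (hp : ∀ x, p (DW x) = DW' (p x)) :
    IsConformalBilin DU' DV' DW' (fun l a b => p (f l (i a) (j b))) where
  add_left l a a' b := by simp [hf.add_left]
  smul_left l c a b := by simp [hf.smul_left]
  add_right l a b b' := by simp [hf.add_right]
  smul_right l c a b := by simp [hf.smul_right]
  poly a b := (hf.poly (i a) (j b)).comp_lin p
  conf_left l a b := by simp [hi, hf.conf_left]
  conf_right l a b := by simp [hj, hf.conf_right, hp]

section

variable {R Q : Type*} [AddCommGroup R] [Module ℂ R] [AddCommGroup Q] [Module ℂ Q]
    {DR : Module.End ℂ R} {DQ : Module.End ℂ Q} {br : ℂ → R → R → R}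

theorem LCAOn.unified_eq (A : LCAOn R Q DR DQ br) :
    unifiedBracket br
      (fun l a y => (A.brE l (a, 0) (0, y)).1) (fun l a y => (A.brE l (a, 0) (0, y)).2)
      (fun l x b => (A.brE l (0, x) (b, 0)).2) (fun l x b => (A.brE l (0, x) (b, 0)).1)
      (fun l x y => (A.brE l (0, x) (0, y)).1) (fun l x y => (A.brE l (0, x) (0, y)).2)
      = A.brE := by
  funext l p q
  obtain ⟨a, x⟩ := p
  obtain ⟨b, y⟩ := q
  have h : A.brE l (a, x) (b, y) = A.brE l (a, 0) (b, 0) + A.brE l (a, 0) (0, y)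
      + (A.brE l (0, x) (b, 0) + A.brE l (0, x) (0, y)) := by
    rw [← A.leib.bilin.add_right, ← A.leib.bilin.add_right, ← A.leib.bilin.add_left]
    simp
  rw [h, A.sub]
  ext <;> simp [unifiedBracket, add_assoc]

/-- The extending structure extracted from an algebra structure on `R × Q`. -/
def LCAOn.toExt (A : LCAOn R Q DR DQ br) : ExtStruct R Q DR DQ br where
  lh := fun l a y => (A.brE l (a, 0) (0, y)).1
  rh := fun l a y => (A.brE l (a, 0) (0, y)).2
  lt := fun l x b => (A.brE l (0, x) (b, 0)).2
  rt := fun l x b => (A.brE l (0, x) (b, 0)).1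
  fm := fun l x y => (A.brE l (0, x) (0, y)).1
  bq := fun l x y => (A.brE l (0, x) (0, y)).2
  datum :=
    { lh_bilin := A.leib.bilin.comp_lin (LinearMap.inl ℂ R Q) (LinearMap.inr ℂ R Q)
        (LinearMap.fst ℂ R Q) (by simp) (by simp) (by simp)
      rh_bilin := A.leib.bilin.comp_lin (LinearMap.inl ℂ R Q) (LinearMap.inr ℂ R Q)
        (LinearMap.snd ℂ R Q) (by simp) (by simp) (by simp)
      lt_bilin := A.leib.bilin.comp_lin (LinearMap.inr ℂ R Q) (LinearMap.inl ℂ R Q)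
        (LinearMap.snd ℂ R Q) (by simp) (by simp) (by simp)
      rt_bilin := A.leib.bilin.comp_lin (LinearMap.inr ℂ R Q) (LinearMap.inl ℂ R Q)
        (LinearMap.fst ℂ R Q) (by simp) (by simp) (by simp)
      fm_bilin := A.leib.bilin.comp_lin (LinearMap.inr ℂ R Q) (LinearMap.inr ℂ R Q)
        (LinearMap.fst ℂ R Q) (by simp) (by simp) (by simp)
      bq_bilin := A.leib.bilin.comp_lin (LinearMap.inr ℂ R Q) (LinearMap.inr ℂ R Q)
        (LinearMap.snd ℂ R Q) (by simp) (by simp) (by simp) }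
  leib := by
    rw [A.unified_eq]
    exact A.leib

theorem LCAOn.toExt_toLCA (A : LCAOn R Q DR DQ br) : A.toExt.toLCA = A := by
  have h := A.unified_eq
  cases A
  simp only [ExtStruct.toLCA, LCAOn.toExt, LCAOn.mk.injEq]
  exact h

theorem ExtStruct.toLCA_toExt (hb : IsLeibnizConformal DR br) (Ω : ExtStruct R Q DR DQ br) :
    Ω.toLCA.toExt = Ω := by
  obtain ⟨lh, rh, lt, rt, fm, bq, h, hl⟩ := Ω
  simp only [ExtStruct.toLCA, LCAOn.toExt, ExtStruct.mk.injEq, unifiedBracket]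
  simp [hb.bilin.zero_left, hb.bilin.zero_right,
      h.lh_bilin.zero_right, h.rt_bilin.zero_left,
      h.fm_bilin.zero_left, h.rh_bilin.zero_right,
      h.lt_bilin.zero_left, h.bq_bilin.zero_left,
      h.lh_bilin.zero_left, h.rt_bilin.zero_right,
      h.fm_bilin.zero_right, h.rh_bilin.zero_left,
      h.lt_bilin.zero_right, h.bq_bilin.zero_right]

/-- Extending structures are the same as algebra structures on `R × Q`. -/
def extLCAEquiv (hb : IsLeibnizConformal DR br) :
    ExtStruct R Q DR DQ br ≃ LCAOn R Q DR DQ br where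
  toFun := ExtStruct.toLCA
  invFun := LCAOn.toExt
  left_inv := ExtStruct.toLCA_toExt hb
  right_inv := LCAOn.toExt_toLCA

/-- The map `(a, x) ↦ (a + u x, v x)`. -/
def phiMap (u : Q →ₗ[ℂ] R) (v : Q ≃ₗ[ℂ] Q) : R × Q →ₗ[ℂ] R × Q :=
  (LinearMap.fst ℂ R Q + u ∘ₗ LinearMap.snd ℂ R Q).prod (v.toLinearMap ∘ₗ LinearMap.snd ℂ R Q)

theorem phiMap_apply (u : Q →ₗ[ℂ] R) (v : Q ≃ₗ[ℂ] Q) (p : R × Q) :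
    phiMap u v p = (p.1 + u p.2, v p.2) := rfl

theorem phiMap_bijective (u : Q →ₗ[ℂ] R) (v : Q ≃ₗ[ℂ] Q) : Function.Bijective (phiMap u v) := by
  constructor
  · rintro ⟨a, x⟩ ⟨b, y⟩ h
    simp only [phiMap_apply, Prod.mk.injEq, EmbeddingLike.apply_eq_iff_eq] at h
    obtain ⟨h1, rfl⟩ := h
    simpa using h1
  · rintro ⟨a, x⟩
    exact ⟨(a - u (v.symm x), v.symm x), by simp [phiMap_apply]⟩

theorem datumEquivVia_iff (hb : IsLeibnizConformal DR br) (Ω Ω' : ExtStruct R Q DR DQ br)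
    (u : Q →ₗ[ℂ] R) (v : Q ≃ₗ[ℂ] Q) :
    DatumEquivVia DR DQ br Ω.lh Ω.rh Ω.lt Ω.rt Ω.fm Ω.bq
      Ω'.lh Ω'.rh Ω'.lt Ω'.rt Ω'.fm Ω'.bq u v ↔
    PreservesD (LinearMap.prodMap DR DQ) (phiMap u v) ∧
      IsBracketHom Ω.toLCA.brE Ω'.toLCA.brE (phiMap u v) := by
  have h := Ω.datum
  have h' := Ω'.datum
  constructor
  · rintro ⟨hu, hv, h1, h2, h3, h4, h5, h6⟩
    constructor
    · rintro ⟨a, x⟩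
      simp [phiMap_apply, hu, hv]
    · rintro l ⟨a, x⟩ ⟨b, y⟩
      simp only [phiMap_apply, ExtStruct.toLCA, unifiedBracket, h2, h4, h6, map_add, hb.bilin.add_left,
        hb.bilin.add_right, h'.lh_bilin.add_left, h'.rt_bilin.add_right, h'.rh_bilin.add_left,
        h'.lt_bilin.add_right, Prod.mk.injEq]
      constructor
      · abel
      · rw [h1, h3, h5]
        simp only [map_add, LinearEquiv.apply_symm_apply]
        abel
  · rintro ⟨hD, hB⟩
    have hu : ∀ q : Q, u (DQ q) = DR (u q) := fun q => by
      simpa [phiMap_apply] using congrArg Prod.fst (hD (0, q))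
    have hv : ∀ q : Q, v (DQ q) = DQ (v q) := fun q => by
      simpa [phiMap_apply] using congrArg Prod.snd (hD (0, q))
    have Z := fun l a x => hB l (a, 0) (0, x)
    have Y := fun l x a => hB l (0, x) (a, 0)
    have X := fun l x y => hB l (0, x) (0, y)
    simp only [phiMap_apply, ExtStruct.toLCA, unifiedBracket, map_zero, zero_add, add_zero,
      hb.bilin.zero_left, hb.bilin.zero_right,
      h.lh_bilin.zero_right, h.rt_bilin.zero_left,
      h.fm_bilin.zero_left, h.rh_bilin.zero_right,
      h.lt_bilin.zero_left, h.bq_bilin.zero_left,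
      h.lh_bilin.zero_left, h.rt_bilin.zero_right,
      h.fm_bilin.zero_right, h.rh_bilin.zero_left,
      h.lt_bilin.zero_right, h.bq_bilin.zero_right,
      h'.lh_bilin.zero_right, h'.rt_bilin.zero_left,
      h'.fm_bilin.zero_left, h'.rh_bilin.zero_right,
      h'.lt_bilin.zero_left, h'.bq_bilin.zero_left,
      h'.lh_bilin.zero_left, h'.rt_bilin.zero_right,
      h'.fm_bilin.zero_right, h'.rh_bilin.zero_left,
      h'.lt_bilin.zero_right, h'.bq_bilin.zero_right, Prod.mk.injEq] at X Y Z
    refine ⟨hu, hv, fun l a x => ?_, fun l a x => ?_, fun l x a => ?_, fun l x a => ?_,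
      fun l x y => ?_, fun l x y => ?_⟩
    · rw [← (Z l a x).2, v.symm_apply_apply]
    · rw [← (Z l a x).1]; abel
    · rw [← (Y l x a).2, v.symm_apply_apply]
    · rw [← (Y l x a).1]; abel
    · rw [← map_add, ← map_add, ← (X l x y).2, v.symm_apply_apply]
    · rw [← (X l x y).1]; abel

theorem exists_phiMap (φ : R × Q →ₗ[ℂ] R × Q) (hφ : Function.Bijective φ)
    (hs : StabilizesFst φ) : ∃ u v, φ = phiMap u v := by
  have key : ∀ a x, φ (a, x) = (a + (φ (0, x)).1, (φ (0, x)).2) := by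
    intro a x
    have : φ (a, x) = φ (a, 0) + φ (0, x) := by rw [← map_add]; simp
    rw [this, hs a]
    ext <;> simp
  let w : Q →ₗ[ℂ] Q := LinearMap.snd ℂ R Q ∘ₗ φ ∘ₗ LinearMap.inr ℂ R Q
  have hw : Function.Bijective w := by
    constructor
    · rw [← LinearMap.ker_eq_bot, LinearMap.ker_eq_bot']
      intro x hx
      have hx : (φ (0, x)).2 = 0 := hx
      have : φ (0, x) = φ ((φ (0, x)).1, 0) := by
        rw [hs]
        ext <;> simp [hx]
      exact congrArg Prod.snd (hφ.1 this)
    · intro y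
      obtain ⟨⟨a, x⟩, hax⟩ := hφ.2 (0, y)
      refine ⟨x, ?_⟩
      rw [key] at hax
      exact congrArg Prod.snd hax
  refine ⟨LinearMap.fst ℂ R Q ∘ₗ φ ∘ₗ LinearMap.inr ℂ R Q, LinearEquiv.ofBijective w hw, ?_⟩
  refine LinearMap.ext ?_
  rintro ⟨a, x⟩
  rw [key]
  rfl

theorem extEquiv_iff (hb : IsLeibnizConformal DR br) (Ω Ω' : ExtStruct R Q DR DQ br) :
    extEquiv DR DQ br Ω Ω' ↔ lcaEquiv DR DQ br Ω.toLCA Ω'.toLCA := by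
  constructor
  · rintro ⟨u, v, h⟩
    obtain ⟨h1, h2⟩ := (datumEquivVia_iff hb Ω Ω' u v).1 h
    exact ⟨phiMap u v, phiMap_bijective u v, h1, h2, fun a => by simp [phiMap_apply]⟩
  · rintro ⟨φ, hφ, h1, h2, h3⟩
    obtain ⟨u, v, rfl⟩ := exists_phiMap φ hφ h3
    exact ⟨u, v, (datumEquivVia_iff hb Ω Ω' u v).2 ⟨h1, h2⟩⟩

theorem extCohom_iff (hb : IsLeibnizConformal DR br) (Ω Ω' : ExtStruct R Q DR DQ br) :
    extCohom DR DQ br Ω Ω' ↔ lcaCohom DR DQ br Ω.toLCA Ω'.toLCA := by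
  constructor
  · rintro ⟨u, h⟩
    obtain ⟨h1, h2⟩ := (datumEquivVia_iff hb Ω Ω' u _).1 h
    exact ⟨phiMap u _, phiMap_bijective u _, h1, h2, fun a => by simp [phiMap_apply],
      fun p => rfl⟩
  · rintro ⟨φ, hφ, h1, h2, h3, h4⟩
    obtain ⟨u, v, rfl⟩ := exists_phiMap φ hφ h3
    have hv : v = LinearEquiv.refl ℂ Q := LinearEquiv.ext fun x => h4 (0, x)
    subst hv
    exact ⟨u, (datumEquivVia_iff hb Ω Ω' u _).2 ⟨h1, h2⟩⟩

end

/-- The unified product construction induces bijections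
`LH²_R(Q,R) = TCL(R,Q)/≡ → CExtd(E,R)` and `LH²(Q,R) = TCL(R,Q)/≈ → CExtd'(E,R)`. -/
theorem classification_of_extending_structures
    {R Q : Type*} [AddCommGroup R] [Module ℂ R] [AddCommGroup Q] [Module ℂ Q]
    (DR : Module.End ℂ R) (DQ : Module.End ℂ Q)
    (br : ℂ → R → R → R) (hLeib : IsLeibnizConformal DR br) :
    (∃ F : Quot (extEquiv DR DQ br) → Quot (lcaEquiv DR DQ br),
      Function.Bijective F ∧
      ∀ Ω : ExtStruct R Q DR DQ br,
        F (Quot.mk (extEquiv DR DQ br) Ω) = Quot.mk (lcaEquiv DR DQ br) Ω.toLCA) ∧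
    (∃ F : Quot (extCohom DR DQ br) → Quot (lcaCohom DR DQ br),
      Function.Bijective F ∧
      ∀ Ω : ExtStruct R Q DR DQ br,
        F (Quot.mk (extCohom DR DQ br) Ω) = Quot.mk (lcaCohom DR DQ br) Ω.toLCA) := by
  refine ⟨⟨Quot.congr (extLCAEquiv hLeib) (extEquiv_iff hLeib), Equiv.bijective _, fun Ω => rfl⟩,
    ⟨Quot.congr (extLCAEquiv hLeib) (extCohom_iff hLeib), Equiv.bijective _, fun Ω => rfl⟩⟩
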